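/- arXiv:2411.16620 — 3 statements merged into one kernel-verified Lean document; each statement's English description precedes it below -/
import Mathlib

section
/- Let n ≥ 2. For all T, T' in the unitary group U(n−1), all b, b' ∈ ℂ^{n−1} and all c, c' ∈ ℝ, the matrix product M(T,b,c) · M(T',b',c') equals M(TT', b + Tb', c + c' + Im⟨b, Tb'⟩), where ⟨x,y⟩ = ∑ᵢ xᵢ · conj(yᵢ). -/
open Matrix Complex

/-- The parabolic matrix `M(T,b,c)` in block form (blocks of sizes 1, 1, n-1):
`[[1, -‖b‖²/2 + i c, -b* T], [0, 1, 0], [0, b, T]]`. -/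
noncomputable def parabolicMatrix (n : ℕ) (T : Matrix (Fin (n - 1)) (Fin (n - 1)) ℂ)
    (b : Fin (n - 1) → ℂ) (c : ℝ) :
    Matrix (Fin 1 ⊕ (Fin 1 ⊕ Fin (n - 1))) (Fin 1 ⊕ (Fin 1 ⊕ Fin (n - 1))) ℂ :=
  Matrix.of fun i j =>
    match i, j with
    | Sum.inl _, Sum.inl _ => 1
    | Sum.inl _, Sum.inr (Sum.inl _) =>
        -(∑ k, (Complex.normSq (b k) : ℂ)) / 2 + Complex.I * (c : ℂ)
    | Sum.inl _, Sum.inr (Sum.inr j) => -(∑ l, (starRingEnd ℂ) (b l) * T l j)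
    | Sum.inr (Sum.inl _), Sum.inl _ => 0
    | Sum.inr (Sum.inl _), Sum.inr (Sum.inl _) => 1
    | Sum.inr (Sum.inl _), Sum.inr (Sum.inr _) => 0
    | Sum.inr (Sum.inr _), Sum.inl _ => 0
    | Sum.inr (Sum.inr i), Sum.inr (Sum.inl _) => b i
    | Sum.inr (Sum.inr i), Sum.inr (Sum.inr j) => T i j

lemma aux_norm {m : ℕ} (T : Matrix.unitaryGroup (Fin m) ℂ) (b : Fin m → ℂ) :
    star ((T : Matrix (Fin m) (Fin m) ℂ) *ᵥ b) ᵥ* (T : Matrix (Fin m) (Fin m) ℂ) = star b := by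
  have h : star (T : Matrix (Fin m) (Fin m) ℂ) * (T : Matrix (Fin m) (Fin m) ℂ) = 1 :=
    Matrix.mem_unitaryGroup_iff'.mp T.2
  rw [Matrix.star_mulVec, Matrix.vecMul_vecMul, ← Matrix.star_eq_conjTranspose, h,
    Matrix.vecMul_one]

lemma aux_normSq {m : ℕ} (b : Fin m → ℂ) :
    (∑ k, (Complex.normSq (b k) : ℂ)) = star b ⬝ᵥ b := by
  simp [dotProduct, Complex.normSq_eq_conj_mul_self]

lemma aux_row {m : ℕ} (b : Fin m → ℂ) (T : Matrix (Fin m) (Fin m) ℂ) (j : Fin m) :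
    (∑ l, (starRingEnd ℂ) (b l) * T l j) = (star b ᵥ* T) j := by
  simp [Matrix.vecMul, dotProduct]

lemma aux_im (z : ℂ) : Complex.I * ((z.im : ℝ) : ℂ) = (z - star z) / 2 := by
  apply Complex.ext <;> simp

/-- The product `M(T,b,c) · M(T',b',c')` equals
`M(TT', b + Tb', c + c' + Im⟨b, Tb'⟩)` where `⟨x,y⟩ = ∑ i, x i * conj (y i)`. -/
theorem parabolicMatrix_mul (n : ℕ) (hn : 2 ≤ n)
    (T T' : Matrix.unitaryGroup (Fin (n - 1)) ℂ)
    (b b' : Fin (n - 1) → ℂ) (c c' : ℝ) :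
    parabolicMatrix n (T : Matrix (Fin (n - 1)) (Fin (n - 1)) ℂ) b c *
        parabolicMatrix n (T' : Matrix (Fin (n - 1)) (Fin (n - 1)) ℂ) b' c' =
      parabolicMatrix n
        ((T : Matrix (Fin (n - 1)) (Fin (n - 1)) ℂ) * (T' : Matrix (Fin (n - 1)) (Fin (n - 1)) ℂ))
        (b + (T : Matrix (Fin (n - 1)) (Fin (n - 1)) ℂ).mulVec b')
        (c + c' +
          (∑ k, b k * (starRingEnd ℂ)
            ((T : Matrix (Fin (n - 1)) (Fin (n - 1)) ℂ).mulVec b' k)).im) := by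
  have hT := aux_norm T b'
  generalize hA : (T : Matrix (Fin (n - 1)) (Fin (n - 1)) ℂ) = A at *
  generalize (T' : Matrix (Fin (n - 1)) (Fin (n - 1)) ℂ) = A' at *
  have hN : star (A *ᵥ b') ⬝ᵥ (A *ᵥ b') = star b' ⬝ᵥ b' := by
    rw [Matrix.dotProduct_mulVec, hT]
  ext i j
  rw [Matrix.mul_apply, Fintype.sum_sum_type, Fintype.sum_sum_type]
  rcases i with i | i | i <;> rcases j with j | j | j <;>
    simp only [parabolicMatrix, Matrix.of_apply, Finset.univ_unique, Finset.sum_singleton,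
      mul_zero, zero_mul, mul_one, one_mul, add_zero, zero_add, Finset.sum_const_zero]
  · have e : (∑ k, b k * (starRingEnd ℂ) ((A *ᵥ b') k)) = star (A *ᵥ b') ⬝ᵥ b := by
      simp [dotProduct, mul_comm]
    have e2 : (∑ x, -(∑ l, (starRingEnd ℂ) (b l) * A l x) * b' x) = -(star b ⬝ᵥ (A *ᵥ b')) := by
      simp only [aux_row, Matrix.dotProduct_mulVec]
      simp [dotProduct]
    have e3 : star (star (A *ᵥ b') ⬝ᵥ b) = star b ⬝ᵥ (A *ᵥ b') := by
      rw [Matrix.star_dotProduct, star_star, dotProduct_comm] <;> simp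
    rw [e, e2, aux_normSq, aux_normSq, aux_normSq]
    push_cast
    rw [mul_add, aux_im, e3, star_add, add_dotProduct, dotProduct_add, dotProduct_add, hN]
    ring
  · have e2 : (∑ x, -(∑ l, (starRingEnd ℂ) (b l) * A l x) * A' x j)
        = -((star b ᵥ* A) ᵥ* A') j := by
      simp only [aux_row]
      simp [Matrix.vecMul, dotProduct]
    rw [e2, aux_row, aux_row, star_add, Matrix.add_vecMul, ← Matrix.vecMul_vecMul,
      ← Matrix.vecMul_vecMul, hT]
    simp only [Pi.add_apply]
    ring
  · simp [Matrix.mulVec, dotProduct]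
  · simp [Matrix.mul_apply]
end

section
/- Let m, k ≥ 1, let π₁,…,π_k, σ₁,…,σ_k be unitary ℂ-linear automorphisms of ℂ^m that pairwise commute, and let b₁,…,b_k, c₁,…,c_k ∈ ℂ^m. Define affine bijections xᵢ(z) = πᵢ z + bᵢ and yᵢ(z) = σᵢ z + cᵢ of ℂ^m, and let z := [x₁,y₁] ∘ ⋯ ∘ [x_k,y_k] be the product of the commutators [xᵢ,yᵢ] = xᵢ ∘ yᵢ ∘ xᵢ⁻¹ ∘ yᵢ⁻¹. If z commutes (under composition) with each xᵢ and each yᵢ, then z is the identity map. -/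
open Function

theorem foldr_translation_aux {E : Type*} [AddCommGroup E] (W : AddSubgroup E) (l : List (E → E))
    (h : ∀ f ∈ l, ∃ w ∈ W, ∀ v, f v = v + w) :
    ∃ w ∈ W, ∀ v, l.foldr (· ∘ ·) id v = v + w := by
  induction l with
  | nil => exact ⟨0, W.zero_mem, fun v => by simp⟩
  | cons f l ih =>
    obtain ⟨w, hw, hf⟩ := h f (by simp)
    obtain ⟨u, hu, hl⟩ := ih (fun g hg => h g (by simp [hg]))
    refine ⟨u + w, W.add_mem hu hw, fun v => ?_⟩
    rw [List.foldr_cons, Function.comp_apply, hl, hf, add_assoc]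

/-- If `z` is the product of commutators `[xᵢ, yᵢ]` of affine unitary bijections of `ℂ^m`
with pairwise commuting linear parts, and `z` commutes with each `xᵢ` and each `yᵢ`,
then `z` is the identity. -/
theorem product_of_commutators_central_implies_id
    (m k : ℕ) (hm : 1 ≤ m) (hk : 1 ≤ k)
    (π σ : Fin k → (EuclideanSpace ℂ (Fin m) ≃ₗᵢ[ℂ] EuclideanSpace ℂ (Fin m)))
    (b c : Fin k → EuclideanSpace ℂ (Fin m))
    (hππ : ∀ i j v, π i (π j v) = π j (π i v))
    (hπσ : ∀ i j v, π i (σ j v) = σ j (π i v))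
    (hσσ : ∀ i j v, σ i (σ j v) = σ j (σ i v))
    (x y xinv yinv : Fin k → EuclideanSpace ℂ (Fin m) → EuclideanSpace ℂ (Fin m))
    (hx : ∀ i v, x i v = π i v + b i)
    (hy : ∀ i v, y i v = σ i v + c i)
    (hxinv : ∀ i v, xinv i v = (π i).symm (v - b i))
    (hyinv : ∀ i v, yinv i v = (σ i).symm (v - c i))
    (z : EuclideanSpace ℂ (Fin m) → EuclideanSpace ℂ (Fin m))
    (hz : z = (List.ofFn (fun i => x i ∘ y i ∘ xinv i ∘ yinv i)).foldr (· ∘ ·) id)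
    (hcentral : ∀ i, z ∘ x i = x i ∘ z ∧ z ∘ y i = y i ∘ z) :
    z = id := by
  obtain ⟨t, htW, ht⟩ := foldr_translation_aux
    (AddSubgroup.closure (Set.range fun i => (π i (c i) - c i) - (σ i (b i) - b i)))
    (List.ofFn (fun i => x i ∘ y i ∘ xinv i ∘ yinv i)) (by
      intro f hf
      obtain ⟨i, rfl⟩ := List.mem_ofFn.1 hf
      refine ⟨_, AddSubgroup.subset_closure ⟨i, rfl⟩, fun v => ?_⟩
      obtain ⟨u, rfl⟩ : ∃ u, v = σ i (π i u + b i) + c i :=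
        ⟨(π i).symm ((σ i).symm (v - c i) - b i), by simp⟩
      simp only [Function.comp_apply, hx, hy, hxinv, hyinv, add_sub_cancel_right,
        LinearIsometryEquiv.symm_apply_apply, map_add, hπσ]
      abel)
  rw [← hz] at ht
  have hπt : ∀ i, π i t = t := fun i => by
    have := congrFun (hcentral i).1 0
    simp only [Function.comp_apply, ht, hx, map_add, map_zero, zero_add] at this
    rw [add_comm] at this
    exact (add_right_cancel this).symm
  have hσt : ∀ i, σ i t = t := fun i => by
    have := congrFun (hcentral i).2 0
    simp only [Function.comp_apply, ht, hy, map_add, map_zero, zero_add] at this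
    rw [add_comm] at this
    exact (add_right_cancel this).symm
  have key : ∀ w ∈ AddSubgroup.closure
      (Set.range fun i => (π i (c i) - c i) - (σ i (b i) - b i)), inner ℂ t w = 0 := by
    intro w hw
    induction hw using AddSubgroup.closure_induction with
    | mem w hw =>
      obtain ⟨i, rfl⟩ := hw
      have h1 : inner ℂ t (π i (c i)) = inner ℂ t (c i) := by
        conv_lhs => rw [← hπt i]
        exact (π i).inner_map_map _ _
      have h2 : inner ℂ t (σ i (b i)) = inner ℂ t (b i) := by
        conv_lhs => rw [← hσt i]
        exact (σ i).inner_map_map _ _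
      simp only [inner_sub_right, h1, h2, sub_self]
    | zero => simp
    | add a b _ _ ha hb => rw [inner_add_right, ha, hb, add_zero]
    | neg a _ ha => rw [inner_neg_right, ha, neg_zero]
  have h0 : t = 0 := inner_self_eq_zero.1 (key t htW)
  funext v
  rw [ht, h0, add_zero, id]
end

section
/- Let E = ℂ^m with its standard Hermitian inner product, and let G be a nilpotent subgroup of the group of bijective isometries of E such that every g ∈ G is an affine unitary transformation, i.e. g(z) = T_g z + b_g for some unitary ℂ-linear automorphism T_g of E and some b_g ∈ E, and such that the linear parts pairwise commute: T_g T_h = T_h T_g for all g, h ∈ G. Then G is commutative. -/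
theorem inner_fixed_aux {E : Type*} [NormedAddCommGroup E] [InnerProductSpace ℂ E]
    (T : E ≃ₗᵢ[ℂ] E) (w x : E) (hw : T w = w) : inner ℂ w (T x - x) = 0 := by
  have h := T.inner_map_map w x
  rw [hw] at h
  rw [inner_sub_right, h, sub_self]

/-- A nilpotent group of bijective isometries of `ℂ^m` consisting of affine unitary
transformations whose linear parts pairwise commute is commutative. -/
theorem nilpotent_affine_unitary_group_abelian
    (m : ℕ)
    (G : Subgroup (EuclideanSpace ℂ (Fin m) ≃ᵢ EuclideanSpace ℂ (Fin m)))
    [Group.IsNilpotent G]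
    (T : G → (EuclideanSpace ℂ (Fin m) ≃ₗᵢ[ℂ] EuclideanSpace ℂ (Fin m)))
    (b : G → EuclideanSpace ℂ (Fin m))
    (haff : ∀ (g : G) (z : EuclideanSpace ℂ (Fin m)),
      (g : EuclideanSpace ℂ (Fin m) ≃ᵢ EuclideanSpace ℂ (Fin m)) z = T g z + b g)
    (hcomm : ∀ (g h : G) (z : EuclideanSpace ℂ (Fin m)), T g (T h z) = T h (T g z)) :
    ∀ g h : G, g * h = h * g := by
  have key : ∀ n : ℕ, ∀ k ∈ Subgroup.upperCentralSeries G n, ∀ v : EuclideanSpace ℂ (Fin m),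
      (∀ z, (k : EuclideanSpace ℂ (Fin m) ≃ᵢ EuclideanSpace ℂ (Fin m)) z = z + v) →
      ∀ g : G, T g v = v := by
    intro n
    induction n with
    | zero =>
      intro k hk v hv g
      have hk1 : k = 1 := by simpa using hk
      have h0 := hv 0
      rw [hk1] at h0
      have hv0 : v = 0 := by simpa using h0.symm
      rw [hv0, map_zero]
    | succ n ih =>
      intro k hk v hv g
      rw [Subgroup.mem_upperCentralSeries_succ_iff] at hk
      have hu := ih _ (hk g) (v - T g v) (by
        intro y
        obtain ⟨z, rfl⟩ := ((g * k : G) : EuclideanSpace ℂ (Fin m) ≃ᵢ _).surjective y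
        have e : (k * g * k⁻¹ * g⁻¹) * (g * k) = k * g := by group
        have e2 := congrArg (fun x : G => (x : EuclideanSpace ℂ (Fin m) ≃ᵢ EuclideanSpace ℂ (Fin m)) z) e
        rw [Subgroup.coe_mul _ (k * g * k⁻¹ * g⁻¹)] at e2
        refine Eq.trans e2 ?_
        simp only [Subgroup.coe_mul, IsometryEquiv.mul_apply, hv, haff g, map_add]
        abel) g
      have h1 := inner_fixed_aux (T g) _ v hu
      have h2 : inner ℂ (v - T g v) (v - T g v) = 0 := by
        rw [← neg_sub (T g v) v, inner_neg_right, neg_sub, h1, neg_zero]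
      exact (sub_eq_zero.mp (inner_self_eq_zero.mp h2)).symm
  obtain ⟨n, hn⟩ := Group.IsNilpotent.nilpotent (G := G)
  intro g h
  set c := (T g (b h) - b h) - (T h (b g) - b g) with hc
  have hfix : ∀ f : G, T f c = c := by
    refine key n (g * h * g⁻¹ * h⁻¹) (by rw [hn]; trivial) c ?_
    intro y
    obtain ⟨z, rfl⟩ := ((h * g : G) : EuclideanSpace ℂ (Fin m) ≃ᵢ _).surjective y
    have e : (g * h * g⁻¹ * h⁻¹) * (h * g) = g * h := by group
    have e2 := congrArg (fun x : G => (x : EuclideanSpace ℂ (Fin m) ≃ᵢ EuclideanSpace ℂ (Fin m)) z) e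
    rw [Subgroup.coe_mul _ (g * h * g⁻¹ * h⁻¹)] at e2
    refine Eq.trans e2 ?_
    simp only [Subgroup.coe_mul, IsometryEquiv.mul_apply, haff g, haff h, map_add, hc, hcomm g h]
    abel
  have hc0 : c = 0 := by
    rw [← inner_self_eq_zero (𝕜 := ℂ)]
    conv_lhs => rw [hc]
    rw [← hc, hc, inner_sub_right, ← hc, inner_fixed_aux _ _ _ (hfix g),
      inner_fixed_aux _ _ _ (hfix h), sub_zero]
  apply Subtype.ext
  ext1 z
  have h3 : T g (b h) = b h + T h (b g) - b g := by
    rw [← sub_eq_zero, ← hc0, hc]; abel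
  simp only [Subgroup.coe_mul, IsometryEquiv.mul_apply, haff g, haff h, map_add, hcomm g h, h3]
  abel
end
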